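/- arXiv:1711.08781 — 5 statements merged into one kernel-verified Lean document; each statement's English description precedes it below -/
import Mathlib

section
/- Let k be an algebraically closed field, G a group, and ρ : G → SL₂(k) a representation. Then ρ is irreducible (i.e., no 1-dimensional k-subspace of k² is invariant under ρ(g) for all g ∈ G) if and only if there exist α, β ∈ G such that Tr(ρ(α β α⁻¹ β⁻¹)) ≠ 2. -/
/-!
A line `k·v` invariant under `ρ` makes `ρ g` act on `v` by a scalar `c g`, so the commutator
`ρ [α, β]` fixes `v`; hence `0 = det (ρ [α, β] - 1) = 2 - tr ρ [α, β]`.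

Conversely, suppose all commutators have trace `2`. If every `ρ g` is upper triangular, the first
basis vector spans an invariant line. Otherwise some `A = ρ g₀` has nonzero lower left entry, and
an eigenvector of `A` (this is where `k` algebraically closed enters) yields a change of basis in
`SL₂(k)` after which `A = (a, t; 0, d)` with `t ≠ 0`. For `B = (p, q; r, s)`:

* if `a = d`, then `tr [A, B] = 2 + t² r²`, so every `B` is upper triangular;
* if `a ≠ d`, a further change of basis makes `A` diagonal, and `tr [A, B] = 2 - q r (a - d)²`.
  So every `B` is upper or lower triangular, and since a product of a non-diagonal upper and a
  non-diagonal lower triangular matrix is neither, one of the two coordinate axes is invariant.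
-/

open Matrix

/-- A representation `ρ : G → SL₂(k)` is irreducible if no 1-dimensional subspace of `k²`
is invariant under all `ρ(g)`. -/
def IsIrreducibleSL2 {k : Type*} [Field k] {G : Type*} [Group G]
    (ρ : G →* Matrix.SpecialLinearGroup (Fin 2) k) : Prop :=
  ¬ ∃ W : Submodule k (Fin 2 → k), Module.finrank k W = 1 ∧
      ∀ g : G, ∀ v ∈ W, ((ρ g : Matrix (Fin 2) (Fin 2) k)).mulVec v ∈ W

namespace SL2Trace

variable {k : Type*} [Field k] {G : Type*} [Group G]

/-- The image of `ρ` has a common eigenvector. -/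
def HasCommonEigenvector (ρ : G →* Matrix.SpecialLinearGroup (Fin 2) k) : Prop :=
  ∃ v : Fin 2 → k, v ≠ 0 ∧ ∀ g, ∃ c : k, (ρ g : Matrix (Fin 2) (Fin 2) k) *ᵥ v = c • v

/-- Every commutator has trace `2` under `ρ`. -/
def CommutatorTraceTwo (ρ : G →* Matrix.SpecialLinearGroup (Fin 2) k) : Prop :=
  ∀ α β : G, trace ((ρ (α * β * α⁻¹ * β⁻¹) : Matrix (Fin 2) (Fin 2) k)) = 2

/-- The representation `g ↦ P⁻¹ ρ(g) P`, that is, `ρ` in the basis of columns of `P`. -/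
def changeBasis (P : Matrix.SpecialLinearGroup (Fin 2) k) (ρ : G →* Matrix.SpecialLinearGroup (Fin 2) k) :
    G →* Matrix.SpecialLinearGroup (Fin 2) k :=
  (MulAut.conj P⁻¹).toMonoidHom.comp ρ

lemma changeBasis_apply (P : Matrix.SpecialLinearGroup (Fin 2) k)
    (ρ : G →* Matrix.SpecialLinearGroup (Fin 2) k) (g : G) :
    changeBasis P ρ g = P⁻¹ * ρ g * P := by
  simp [changeBasis]

lemma not_isIrreducibleSL2_iff (ρ : G →* Matrix.SpecialLinearGroup (Fin 2) k) :
    ¬ IsIrreducibleSL2 ρ ↔ HasCommonEigenvector ρ := by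
  unfold IsIrreducibleSL2 HasCommonEigenvector
  rw [not_not]
  constructor
  · rintro ⟨W, hW, h⟩
    obtain ⟨⟨v, hv⟩, hv0, hspan⟩ := finrank_eq_one_iff'.mp hW
    refine ⟨v, fun h0 => hv0 (Subtype.ext h0), fun g => ?_⟩
    obtain ⟨c, hc⟩ := hspan ⟨_, h g v hv⟩
    exact ⟨c, (congrArg Subtype.val hc).symm⟩
  · rintro ⟨v, hv0, h⟩
    refine ⟨Submodule.span k {v}, finrank_span_singleton hv0, fun g w hw => ?_⟩
    obtain ⟨a, rfl⟩ := Submodule.mem_span_singleton.mp hw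
    obtain ⟨c, hc⟩ := h g
    rw [mulVec_smul, hc]
    exact Submodule.smul_mem _ _ (Submodule.smul_mem _ _ (Submodule.mem_span_singleton_self v))

lemma HasCommonEigenvector.of_changeBasis {P : Matrix.SpecialLinearGroup (Fin 2) k}
    {ρ : G →* Matrix.SpecialLinearGroup (Fin 2) k} (h : HasCommonEigenvector (changeBasis P ρ)) :
    HasCommonEigenvector ρ := by
  obtain ⟨v, hv0, h⟩ := h
  refine ⟨(P : Matrix (Fin 2) (Fin 2) k) *ᵥ v, fun h0 => hv0 ?_, fun g => ?_⟩
  · have : (((P⁻¹ * P : Matrix.SpecialLinearGroup (Fin 2) k)) : Matrix (Fin 2) (Fin 2) k) *ᵥ v = 0 := by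
      rw [Matrix.SpecialLinearGroup.coe_mul, ← mulVec_mulVec, h0, mulVec_zero]
    simpa using this
  · obtain ⟨c, hc⟩ := h g
    refine ⟨c, ?_⟩
    rw [← mulVec_smul, ← hc, changeBasis_apply, mulVec_mulVec, mulVec_mulVec,
      ← Matrix.SpecialLinearGroup.coe_mul, ← Matrix.SpecialLinearGroup.coe_mul]
    rw [show P * (P⁻¹ * ρ g * P) = ρ g * P by group]

lemma CommutatorTraceTwo.changeBasis {ρ : G →* Matrix.SpecialLinearGroup (Fin 2) k}
    (h : CommutatorTraceTwo ρ) (P : Matrix.SpecialLinearGroup (Fin 2) k) :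
    CommutatorTraceTwo (changeBasis P ρ) := by
  intro α β
  rw [changeBasis_apply, Matrix.SpecialLinearGroup.coe_mul, trace_mul_comm, ← Matrix.SpecialLinearGroup.coe_mul,
    ← h α β]
  congr 2
  exact mul_inv_cancel_left P _

/-- The trace of a commutator in `SL₂`, with the inverses written out as adjugates. -/
lemma CommutatorTraceTwo.entries {ρ : G →* Matrix.SpecialLinearGroup (Fin 2) k}
    (h : CommutatorTraceTwo ρ) (α β : G) :
    trace ((ρ α : Matrix (Fin 2) (Fin 2) k) * (ρ β : Matrix (Fin 2) (Fin 2) k) * adjugate (ρ α : Matrix (Fin 2) (Fin 2) k)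
      * adjugate (ρ β : Matrix (Fin 2) (Fin 2) k)) = 2 := by
  simpa [Matrix.SpecialLinearGroup.coe_inv] using h α β

lemma det_entries (A : Matrix.SpecialLinearGroup (Fin 2) k) : A 0 0 * A 1 1 - A 0 1 * A 1 0 = 1 := by
  rw [← det_fin_two]
  exact A.det_coe

lemma hasCommonEigenvector_of_upper {ρ : G →* Matrix.SpecialLinearGroup (Fin 2) k}
    (h : ∀ g, ρ g 1 0 = 0) : HasCommonEigenvector ρ := by
  refine ⟨![1, 0], fun h0 => one_ne_zero (congrFun h0 0), fun g => ⟨ρ g 0 0, ?_⟩⟩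
  ext i
  fin_cases i <;> simp [mulVec, dotProduct, Fin.sum_univ_two, h]

lemma hasCommonEigenvector_of_lower {ρ : G →* Matrix.SpecialLinearGroup (Fin 2) k}
    (h : ∀ g, ρ g 0 1 = 0) : HasCommonEigenvector ρ := by
  refine ⟨![0, 1], fun h0 => one_ne_zero (congrFun h0 1), fun g => ⟨ρ g 1 1, ?_⟩⟩
  ext i
  fin_cases i <;> simp [mulVec, dotProduct, Fin.sum_univ_two, h]

/-- The case of a non-central diagonal matrix in the image. -/
lemma hasCommonEigenvector_of_diagonal {ρ : G →* Matrix.SpecialLinearGroup (Fin 2) k}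
    (h : CommutatorTraceTwo ρ) (g₀ : G) (h10 : ρ g₀ 1 0 = 0) (h01 : ρ g₀ 0 1 = 0)
    (hne : ρ g₀ 0 0 ≠ ρ g₀ 1 1) : HasCommonEigenvector ρ := by
  have key : ∀ g, ρ g 0 1 = 0 ∨ ρ g 1 0 = 0 := by
    intro g
    have hA := det_entries (ρ g₀)
    have hB := det_entries (ρ g)
    have ht := h.entries g₀ g
    simp only [trace_fin_two, adjugate_fin_two, mul_apply, Fin.sum_univ_two, h10, h01,
      of_apply, cons_val', cons_val_zero, cons_val_one, cons_val_fin_one] at ht hA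
    have : ρ g 0 1 * ρ g 1 0 * (ρ g₀ 0 0 - ρ g₀ 1 1) ^ 2 = 0 := by
      linear_combination -ht + (2 * ρ g 0 0 * ρ g 1 1 - 2 * ρ g 0 1 * ρ g 1 0) * hA + 2 * hB
    simpa [sub_ne_zero.mpr hne] using this
  by_cases hup : ∀ g, ρ g 1 0 = 0
  · exact hasCommonEigenvector_of_upper hup
  refine hasCommonEigenvector_of_lower fun c => ?_
  by_contra hc
  push Not at hup
  obtain ⟨b, hb⟩ := hup
  have hb0 := (key b).resolve_right hb
  have hc0 := (key c).resolve_left hc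
  have hB := det_entries (ρ b)
  have hC := det_entries (ρ c)
  have hcb := key (c * b)
  simp only [map_mul, Matrix.SpecialLinearGroup.coe_mul, mul_apply,
    Fin.sum_univ_two, hb0, hc0] at hcb hB hC
  -- the diagonal entries of both triangular matrices are nonzero
  have h1 : ρ b 1 1 ≠ 0 := fun h0 => by simp [h0] at hB
  have h2 : ρ c 1 1 ≠ 0 := fun h0 => by simp [h0] at hC
  simp [hb, hc, h1, h2] at hcb

/-- The case of a non-diagonal upper triangular matrix in the image. -/
lemma hasCommonEigenvector_of_triangular {ρ : G →* Matrix.SpecialLinearGroup (Fin 2) k}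
    (h : CommutatorTraceTwo ρ) (g₀ : G) (h10 : ρ g₀ 1 0 = 0) (h01 : ρ g₀ 0 1 ≠ 0) :
    HasCommonEigenvector ρ := by
  by_cases hne : ρ g₀ 0 0 = ρ g₀ 1 1
  · refine hasCommonEigenvector_of_upper fun g => ?_
    have hA := det_entries (ρ g₀)
    have hB := det_entries (ρ g)
    have ht := h.entries g₀ g
    simp only [trace_fin_two, adjugate_fin_two, mul_apply, Fin.sum_univ_two, h10, hne,
      of_apply, cons_val', cons_val_zero, cons_val_one, cons_val_fin_one] at ht hA
    have : (ρ g₀ 0 1 * ρ g 1 0) ^ 2 = 0 := by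
      linear_combination ht - (2 * ρ g 0 0 * ρ g 1 1 - 2 * ρ g 0 1 * ρ g 1 0) * hA - 2 * hB
    simpa [h01] using this
  · -- the second column of `P` is the eigenvector for the eigenvalue `ρ g₀ 1 1`
    let u := ρ g₀ 0 1 / (ρ g₀ 1 1 - ρ g₀ 0 0)
    have hu : u * (ρ g₀ 1 1 - ρ g₀ 0 0) = ρ g₀ 0 1 :=
      div_mul_cancel₀ _ (sub_ne_zero.mpr (Ne.symm hne))
    let P : Matrix.SpecialLinearGroup (Fin 2) k := ⟨!![1, u; 0, 1], by simp [det_fin_two]⟩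
    have hP : (changeBasis P ρ g₀ : Matrix (Fin 2) (Fin 2) k) =
        !![ρ g₀ 0 0, 0; 0, ρ g₀ 1 1] := by
      rw [changeBasis_apply, Matrix.SpecialLinearGroup.coe_mul, Matrix.SpecialLinearGroup.coe_mul,
        Matrix.SpecialLinearGroup.coe_inv]
      ext i j
      fin_cases i <;> fin_cases j <;>
        simp [P, adjugate_fin_two, mul_apply, vecMul, dotProduct, Fin.sum_univ_two, h10]
      linear_combination -hu
    refine HasCommonEigenvector.of_changeBasis
      (hasCommonEigenvector_of_diagonal (h.changeBasis P) g₀ ?_ ?_ ?_) <;> simp [hP, hne]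

lemma hasCommonEigenvector_of_commutatorTraceTwo [IsAlgClosed k]
    {ρ : G →* Matrix.SpecialLinearGroup (Fin 2) k} (h : CommutatorTraceTwo ρ) :
    HasCommonEigenvector ρ := by
  by_cases hup : ∀ g, ρ g 1 0 = 0
  · exact hasCommonEigenvector_of_upper hup
  push Not at hup
  obtain ⟨g₀, hc⟩ := hup
  obtain ⟨l, hl⟩ : ∃ l : k, l ^ 2 - (ρ g₀ 0 0 + ρ g₀ 1 1) * l + 1 = 0 := by
    obtain ⟨l, hl⟩ := IsAlgClosed.exists_root
      (Polynomial.C 1 * Polynomial.X ^ 2 + Polynomial.C (-(ρ g₀ 0 0 + ρ g₀ 1 1)) * Polynomial.X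
        + Polynomial.C 1 : Polynomial k)
      (by rw [Polynomial.degree_quadratic one_ne_zero]; decide)
    refine ⟨l, ?_⟩
    simp only [Polynomial.IsRoot.def, Polynomial.eval_add, Polynomial.eval_mul,
      Polynomial.eval_pow, Polynomial.eval_C, Polynomial.eval_X] at hl
    linear_combination hl
  have hA := det_entries (ρ g₀)
  -- the first column of `P` is the eigenvector for the eigenvalue `l`
  let P : Matrix.SpecialLinearGroup (Fin 2) k :=
    ⟨!![l - ρ g₀ 1 1, -(ρ g₀ 1 0)⁻¹; ρ g₀ 1 0, 0], by simp [det_fin_two, hc]⟩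
  have hP : ∀ M : Matrix.SpecialLinearGroup (Fin 2) k, ((P⁻¹ * M * P : Matrix.SpecialLinearGroup (Fin 2) k) :
      Matrix (Fin 2) (Fin 2) k) = adjugate !![l - ρ g₀ 1 1, -(ρ g₀ 1 0)⁻¹; ρ g₀ 1 0, 0] *
        (M : Matrix (Fin 2) (Fin 2) k) * !![l - ρ g₀ 1 1, -(ρ g₀ 1 0)⁻¹; ρ g₀ 1 0, 0] := by
    intro M
    rw [Matrix.SpecialLinearGroup.coe_mul, Matrix.SpecialLinearGroup.coe_mul, Matrix.SpecialLinearGroup.coe_inv]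
  refine HasCommonEigenvector.of_changeBasis (P := P)
    (hasCommonEigenvector_of_triangular (h.changeBasis P) g₀ ?_ ?_)
  · rw [changeBasis_apply, hP]
    simp [adjugate_fin_two, mul_apply, vecMul, dotProduct, Fin.sum_univ_two]
    linear_combination ρ g₀ 1 0 * (hl + hA)
  · rw [changeBasis_apply, hP]
    simp [adjugate_fin_two, mul_apply, vecMul, dotProduct, Fin.sum_univ_two, hc]

lemma HasCommonEigenvector.commutatorTraceTwo {ρ : G →* Matrix.SpecialLinearGroup (Fin 2) k}
    (h : HasCommonEigenvector ρ) : CommutatorTraceTwo ρ := by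
  obtain ⟨v, hv0, h⟩ := h
  intro α β
  obtain ⟨a, ha⟩ := h α
  obtain ⟨b, hb⟩ := h β
  -- the scalars on `v` commute, so `ρ (α * β)` and `ρ (β * α)` agree on `v`
  have hcomm : (ρ (α * β * α⁻¹ * β⁻¹) : Matrix (Fin 2) (Fin 2) k) *ᵥ v = v := by
    have hab : (ρ (α * β) : Matrix (Fin 2) (Fin 2) k) *ᵥ v = (a * b) • v := by
      rw [map_mul, Matrix.SpecialLinearGroup.coe_mul, ← mulVec_mulVec, hb, mulVec_smul, ha, smul_smul,
        mul_comm]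
    have hba : (ρ (β * α) : Matrix (Fin 2) (Fin 2) k) *ᵥ v = (a * b) • v := by
      rw [map_mul, Matrix.SpecialLinearGroup.coe_mul, ← mulVec_mulVec, ha, mulVec_smul, hb, smul_smul]
    have hinv : (ρ (β * α)⁻¹ : Matrix (Fin 2) (Fin 2) k) *ᵥ ((a * b) • v) = v := by
      rw [← hba, mulVec_mulVec, ← Matrix.SpecialLinearGroup.coe_mul, ← map_mul, inv_mul_cancel, map_one,
        Matrix.SpecialLinearGroup.coe_one, one_mulVec]
    obtain ⟨c, hc⟩ := h (β * α)⁻¹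
    have hcv : (c * (a * b)) • v = v := by
      rw [mulVec_smul, hc, smul_smul, mul_comm] at hinv
      exact hinv
    rw [show α * β * α⁻¹ * β⁻¹ = (α * β) * (β * α)⁻¹ by group, map_mul,
      Matrix.SpecialLinearGroup.coe_mul, ← mulVec_mulVec, hc, mulVec_smul, hab, smul_smul, hcv]
  have hdet : det ((ρ (α * β * α⁻¹ * β⁻¹) : Matrix (Fin 2) (Fin 2) k) - 1) = 0 :=
    exists_mulVec_eq_zero_iff.mp ⟨v, hv0, by rw [sub_mulVec, hcomm, one_mulVec, sub_self]⟩
  have h1 := det_entries (ρ (α * β * α⁻¹ * β⁻¹))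
  rw [det_fin_two] at hdet
  simp only [Matrix.sub_apply, one_apply_eq, ne_eq, zero_ne_one, one_ne_zero, not_false_eq_true,
    one_apply_ne] at hdet
  rw [trace_fin_two]
  linear_combination h1 - hdet

end SL2Trace

/-- Over an algebraically closed field, a representation `ρ : G → SL₂(k)` is irreducible
iff there are `α, β ∈ G` with `Tr(ρ(αβα⁻¹β⁻¹)) ≠ 2`. -/
theorem isIrreducibleSL2_iff_exists_trace_commutator_ne_two
    {k : Type*} [Field k] [IsAlgClosed k] {G : Type*} [Group G]
    (ρ : G →* Matrix.SpecialLinearGroup (Fin 2) k) :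
    IsIrreducibleSL2 ρ ↔ ∃ α β : G,
      Matrix.trace ((ρ (α * β * α⁻¹ * β⁻¹) : Matrix (Fin 2) (Fin 2) k)) ≠ 2 := by
  rw [← not_iff_not, SL2Trace.not_isIrreducibleSL2_iff]
  push Not
  exact ⟨SL2Trace.HasCommonEigenvector.commutatorTraceTwo,
    SL2Trace.hasCommonEigenvector_of_commutatorTraceTwo⟩
end

section
/- Let k be an algebraically closed field of characteristic 0 and let G be the group with presentation ⟨a, b | a² = b³⟩ (the trefoil knot group). Then every irreducible representation ρ : G → SL₂(k) satisfies ρ(a)² = −Id, Tr(ρ(a)) = 0, and Tr(ρ(b)) = 1. -/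
/-- The relator `a² b⁻³` of the trefoil knot group `⟨a, b | a² = b³⟩`. -/
def trefoilRels : Set (FreeGroup (Fin 2)) :=
  {FreeGroup.of 0 ^ 2 * (FreeGroup.of 1 ^ 3)⁻¹}

/-- The trefoil knot group `⟨a, b | a² = b³⟩`. -/
def TrefoilGroup : Type := PresentedGroup trefoilRels

noncomputable instance : Group TrefoilGroup :=
  inferInstanceAs (Group (PresentedGroup trefoilRels))

/-- The generator `a` of the trefoil knot group. -/
def trefoilA : TrefoilGroup := PresentedGroup.of 0

/-- The generator `b` of the trefoil knot group. -/
def trefoilB : TrefoilGroup := PresentedGroup.of 1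

/-- A common eigenvector of `ρ(a)` and `ρ(b)` spans an invariant line, because `a` and `b`
generate the group. -/
theorem no_common_eigenvector {k : Type*} [Field k]
    (ρ : TrefoilGroup →* Matrix.SpecialLinearGroup (Fin 2) k)
    (hρ : IsIrreducibleSL2 ρ) (v : Fin 2 → k) (hv : v ≠ 0) (x y : k)
    (hx : (ρ trefoilA : Matrix (Fin 2) (Fin 2) k).mulVec v = x • v)
    (hy : (ρ trefoilB : Matrix (Fin 2) (Fin 2) k).mulVec v = y • v) : False := by
  have key : ∀ g : TrefoilGroup, ∃ c : k,
      (ρ g : Matrix (Fin 2) (Fin 2) k).mulVec v = c • v := by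
    intro g
    have hg : g ∈ Subgroup.closure
        (Set.range (PresentedGroup.of : Fin 2 → PresentedGroup trefoilRels)) := by
      rw [PresentedGroup.closure_range_of]; exact Subgroup.mem_top _
    refine Subgroup.closure_induction (G := TrefoilGroup)
      (p := fun g _ => ∃ c : k, (ρ g : Matrix (Fin 2) (Fin 2) k).mulVec v = c • v)
      ?_ ?_ ?_ ?_ hg
    · rintro _ ⟨i, rfl⟩
      fin_cases i
      · exact ⟨x, hx⟩
      · exact ⟨y, hy⟩
    · exact ⟨1, by simp⟩
    · rintro g h _ _ ⟨c, hc⟩ ⟨d, hd⟩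
      refine ⟨d * c, ?_⟩
      rw [map_mul, Matrix.SpecialLinearGroup.coe_mul, ← Matrix.mulVec_mulVec, hd,
        Matrix.mulVec_smul, hc, smul_smul]
    · rintro g _ ⟨c, hc⟩
      have h1 : c • (ρ g⁻¹ : Matrix (Fin 2) (Fin 2) k).mulVec v = v := by
        rw [← Matrix.mulVec_smul, ← hc, Matrix.mulVec_mulVec,
          ← Matrix.SpecialLinearGroup.coe_mul, ← map_mul]
        simp
      have hc0 : c ≠ 0 := by
        rintro rfl
        exact hv (by simpa using h1.symm)
      exact ⟨c⁻¹, by rw [eq_inv_smul_iff₀ hc0]; exact h1⟩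
  refine hρ ⟨Submodule.span k {v}, finrank_span_singleton hv, fun g w hw => ?_⟩
  obtain ⟨r, rfl⟩ := Submodule.mem_span_singleton.1 hw
  obtain ⟨c, hc⟩ := key g
  rw [Matrix.mulVec_smul, hc]
  exact Submodule.smul_mem _ _ (Submodule.smul_mem _ _ (Submodule.mem_span_singleton_self v))

theorem exists_eigenvector {k : Type*} [Field k] [IsAlgClosed k]
    (M : Matrix (Fin 2) (Fin 2) k) : ∃ v : Fin 2 → k, v ≠ 0 ∧ ∃ c : k, M.mulVec v = c • v := by
  obtain ⟨c, hc⟩ := Module.End.exists_eigenvalue (Matrix.toLin' M)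
  obtain ⟨v, hv⟩ := hc.exists_hasEigenvector
  exact ⟨v, hv.2, c, by simpa using hv.apply_eq_smul⟩

theorem affine_mulVec {k : Type*} [Field k] {M N : Matrix (Fin 2) (Fin 2) k} {p q c : k}
    {v : Fin 2 → k} (h : N = p • M + q • (1 : Matrix (Fin 2) (Fin 2) k))
    (hv : M.mulVec v = c • v) : N.mulVec v = (p * c + q) • v := by
  rw [h, Matrix.add_mulVec, Matrix.smul_mulVec, Matrix.smul_mulVec, hv, Matrix.one_mulVec,
    smul_smul, add_smul]

/-- Cayley–Hamilton for a `2 × 2` matrix of determinant `1`. -/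
theorem sq_eq_of_det_one {k : Type*} [Field k] (M : Matrix (Fin 2) (Fin 2) k)
    (h : M.det = 1) : M * M = M.trace • M - 1 := by
  rw [Matrix.det_fin_two] at h
  ext i j
  fin_cases i <;> fin_cases j <;>
    simp [Matrix.mul_apply, Fin.sum_univ_two, Matrix.trace_fin_two] <;>
    first | ring1 | linear_combination -h

/-- Over an algebraically closed field of characteristic zero, every irreducible
representation `ρ` of the trefoil knot group `⟨a, b | a² = b³⟩` into `SL₂(k)` satisfies
`ρ(a)² = −Id`, `Tr(ρ(a)) = 0` and `Tr(ρ(b)) = 1`. -/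
theorem trefoil_irreducible_rep
    {k : Type*} [Field k] [IsAlgClosed k] [CharZero k]
    (ρ : TrefoilGroup →* Matrix.SpecialLinearGroup (Fin 2) k)
    (hρ : IsIrreducibleSL2 ρ) :
    ((ρ trefoilA ^ 2 : Matrix.SpecialLinearGroup (Fin 2) k) :
        Matrix (Fin 2) (Fin 2) k) = -1 ∧
      Matrix.trace ((ρ trefoilA : Matrix (Fin 2) (Fin 2) k)) = 0 ∧
      Matrix.trace ((ρ trefoilB : Matrix (Fin 2) (Fin 2) k)) = 1 := by
  have rel : ρ trefoilA ^ 2 = ρ trefoilB ^ 3 := by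
    rw [← map_pow, ← map_pow]
    congr 1
    have h : PresentedGroup.mk trefoilRels
        (FreeGroup.of 0 ^ 2 * (FreeGroup.of 1 ^ 3)⁻¹) = 1 :=
      PresentedGroup.one_of_mem (Set.mem_singleton _)
    rw [map_mul, map_inv, mul_inv_eq_one, map_pow, map_pow] at h
    exact h
  have rel' := congrArg (fun M : Matrix.SpecialLinearGroup (Fin 2) k =>
    (M : Matrix (Fin 2) (Fin 2) k)) rel
  have no := no_common_eigenvector ρ hρ
  rw [Matrix.SpecialLinearGroup.coe_pow]
  simp only [Matrix.SpecialLinearGroup.coe_pow] at rel'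
  have hA := sq_eq_of_det_one _ (ρ trefoilA).det_coe
  have hB := sq_eq_of_det_one _ (ρ trefoilB).det_coe
  generalize (ρ trefoilA : Matrix (Fin 2) (Fin 2) k) = A at *
  generalize (ρ trefoilB : Matrix (Fin 2) (Fin 2) k) = B at *
  generalize A.trace = t at *
  generalize B.trace = s at *
  have lin : t • A - 1 = (s ^ 2 - 1) • B - s • (1 : Matrix (Fin 2) (Fin 2) k) := by
    rw [← hA, ← pow_two, rel', pow_succ, pow_two, hB, sub_mul, smul_mul_assoc, hB,
      one_mul]
    module
  have ht : t = 0 := by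
    by_contra ht
    have hAB : A = (t⁻¹ * (s ^ 2 - 1)) • B
        + (t⁻¹ * (1 - s)) • (1 : Matrix (Fin 2) (Fin 2) k) := by
      have h2 : t • A = (s ^ 2 - 1) • B + (1 - s) • (1 : Matrix (Fin 2) (Fin 2) k) := by
        rw [sub_eq_iff_eq_add.1 lin]; module
      rw [← inv_smul_smul₀ ht A, h2]; module
    obtain ⟨v, hv, c, hc⟩ := exists_eigenvector B
    exact no v hv _ _ (affine_mulVec hAB hc) hc
  subst ht
  have hs : s ^ 2 - 1 = 0 := by
    by_contra hs
    have hBA : B = (0 : k) • A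
        + ((s ^ 2 - 1)⁻¹ * (s - 1)) • (1 : Matrix (Fin 2) (Fin 2) k) := by
      have h2 : (s ^ 2 - 1) • B = (s - 1) • (1 : Matrix (Fin 2) (Fin 2) k) := by
        rw [sub_eq_iff_eq_add.1 lin.symm]; module
      rw [← inv_smul_smul₀ hs B, h2]; module
    obtain ⟨v, hv, c, hc⟩ := exists_eigenvector A
    exact no v hv _ _ hc (affine_mulVec hBA hc)
  refine ⟨by rw [pow_two, hA]; simp, rfl, ?_⟩
  rw [hs] at lin
  have h00 := congrFun (congrFun lin 0) 0
  simpa using h00.symm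
end

section
/- Let k be a field, α ∈ k a nonzero element with inverse α⁻¹, and y ∈ k. Set x = α + α⁻¹, and define the matrices U = [[α, 1],[0, α⁻¹]] and V = [[α, 0],[y − α² − α⁻², α⁻¹]] in SL₂(k), and W = U V⁻¹ U⁻¹ V. If 2x² + y² − x²y − y − 1 = 0, then V·W = W·U; that is, u ↦ U, v ↦ V defines a representation of the figure-eight knot group ⟨u, v | v w = w u⟩, where w = u v⁻¹ u⁻¹ v. -/
open Matrix

/-! Since `U` and `V` have determinant one, their inverses are their adjugates, so all entries of
`V * W - W * U` are polynomials in `α`, `α⁻¹` and `y`. With `z = y - α² - α⁻²` and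
`f = 2x² + y² - x²y - y - 1`, the relation `α * α⁻¹ = 1` reduces this difference to
`!![0, -f; z * f, 0]`, which vanishes on the curve `f = 0`. -/

/-- For `α ≠ 0`, `x = α + α⁻¹` and `y` with `2x² + y² − x²y − y − 1 = 0`, the matrices
`U = [[α, 1],[0, α⁻¹]]` and `V = [[α, 0],[y − α² − α⁻², α⁻¹]]` satisfy `V·W = W·U`, where
`W = U V⁻¹ U⁻¹ V`; that is, `u ↦ U`, `v ↦ V` defines a representation of the figure-eight
knot group `⟨u, v | v w = w u⟩`, `w = u v⁻¹ u⁻¹ v`. -/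
theorem figure_eight_rep {k : Type*} [Field k] (α y : k) (hα : α ≠ 0)
    (x : k) (hx : x = α + α⁻¹)
    (heq : 2 * x ^ 2 + y ^ 2 - x ^ 2 * y - y - 1 = 0) :
    let U : Matrix (Fin 2) (Fin 2) k := !![α, 1; 0, α⁻¹]
    let V : Matrix (Fin 2) (Fin 2) k := !![α, 0; y - α ^ 2 - (α⁻¹) ^ 2, α⁻¹]
    let W : Matrix (Fin 2) (Fin 2) k := U * V⁻¹ * U⁻¹ * V
    V * W = W * U := by
  intro U V W
  have hUinv : U⁻¹ = !![α⁻¹, -1; 0, α] := by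
    apply Matrix.inv_eq_right_inv
    ext i j
    fin_cases i <;> fin_cases j <;> simp [U, Matrix.mul_apply, Fin.sum_univ_two, hα]
  have hVinv : V⁻¹ = !![α⁻¹, 0; -(y - α ^ 2 - (α⁻¹) ^ 2), α] := by
    apply Matrix.inv_eq_right_inv
    ext i j
    fin_cases i <;> fin_cases j <;> simp [V, Matrix.mul_apply, Fin.sum_univ_two, hα]
    ring
  have hdiff : V * W - W * U =
      !![0, -(2 * x ^ 2 + y ^ 2 - x ^ 2 * y - y - 1);
        (y - α ^ 2 - (α⁻¹) ^ 2) * (2 * x ^ 2 + y ^ 2 - x ^ 2 * y - y - 1), 0] := by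
    simp only [W, hUinv, hVinv]
    subst hx
    ext i j
    fin_cases i <;> fin_cases j <;>
      simp [U, V, Matrix.mul_apply, Fin.sum_univ_two] <;> field_simp <;> ring
  rw [← sub_eq_zero, hdiff, heq]
  ext i j
  fin_cases i <;> fin_cases j <;> simp
end

section
/- Let k be a field, G a group, and ρ : G → SL₂(k) a representation. Then Tr(ρ(g)) = 2 for every g ∈ G if and only if there exists a nonzero vector w ∈ k² with ρ(g)·w = w for every g ∈ G. -/
/-!
If a nonzero `w` is fixed by `A = ρ g`, then `0 = det (A - 1) = 2 - tr A`.

Conversely, suppose all traces are `2`. If every `ρ g` is upper triangular, its diagonal entries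
are `1` and `(1, 0)` is fixed. Otherwise fix `g` with `ρ g` not upper triangular and put
`N = ρ g - 1`. For each `h`, put `M = ρ h - 1`; both `N` and `M` have trace and determinant zero,
and `tr (ρ (g h)) = 2` gives `tr (N M) = 0`. In every characteristic this forces `M` to be a
multiple of `N`, so the first column of `N`, which is nonzero and spans `ker N`, is killed by every
`M`. The entrywise form of this last fact is `nilpotent_kernel_of_lower_ne_zero`.
-/

open Matrix


/-- For `N = !![a, b; c, -a]` and `M = !![x, y; z, -x]` of determinant zero with `tr (N M) = 0` and
`c ≠ 0`, the first column `(a, c)` of `N` lies in the kernel of `M`. -/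
lemma nilpotent_kernel_of_lower_ne_zero {k : Type*} [Field k] {a b c x y z : k}
    (hN : a * a + b * c = 0) (hM : x * x + y * z = 0)
    (hNM : 2 * (a * x) + b * z + c * y = 0) (hc : c ≠ 0) :
    x * a + y * c = 0 ∧ z * a - x * c = 0 := by
  have hsq : (z * a - x * c) ^ 2 = 0 := by
    linear_combination (-c * z) * hNM + z ^ 2 * hN + c ^ 2 * hM
  have h2 : z * a - x * c = 0 := pow_eq_zero_iff (two_ne_zero) |>.mp hsq
  refine ⟨mul_left_cancel₀ hc ?_, h2⟩
  linear_combination c * hNM - z * hN + a * h2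

/-- For a representation `ρ : G → SL₂(k)`, all traces `Tr(ρ(g))` equal `2` if and only if
there is a nonzero vector `w ∈ k²` fixed by every `ρ(g)`. -/
theorem trace_eq_two_iff_exists_fixed_vector
    {k : Type*} [Field k] {G : Type*} [Group G]
    (ρ : G →* Matrix.SpecialLinearGroup (Fin 2) k) :
    (∀ g : G, Matrix.trace ((ρ g : Matrix (Fin 2) (Fin 2) k)) = 2) ↔
      ∃ w : Fin 2 → k, w ≠ 0 ∧ ∀ g : G,
        ((ρ g : Matrix (Fin 2) (Fin 2) k)).mulVec w = w := by
  have hdet (g : G) : (ρ g) 0 0 * (ρ g) 1 1 - (ρ g) 0 1 * (ρ g) 1 0 = 1 := by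
    rw [← Matrix.det_fin_two]; exact (ρ g).det_coe
  constructor
  · intro htr
    have ht (g : G) : (ρ g) 0 0 + (ρ g) 1 1 = 2 := by
      rw [← Matrix.trace_fin_two]; exact htr g
    have hmul (g h : G) : (ρ g) 0 0 * (ρ h) 0 0 + (ρ g) 0 1 * (ρ h) 1 0
        + ((ρ g) 1 0 * (ρ h) 0 1 + (ρ g) 1 1 * (ρ h) 1 1) = 2 := by
      have := htr (g * h)
      simpa [Matrix.trace_fin_two, Matrix.mul_apply, Fin.sum_univ_two] using this
    -- The determinant of `ρ g - 1` vanishes.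
    have hnil (g : G) : ((ρ g) 0 0 - 1) * ((ρ g) 0 0 - 1) + (ρ g) 0 1 * (ρ g) 1 0 = 0 := by
      linear_combination (ρ g) 0 0 * ht g - hdet g
    -- The product `(ρ g - 1) * (ρ h - 1)` has trace zero.
    have hprod (g h : G) : 2 * (((ρ g) 0 0 - 1) * ((ρ h) 0 0 - 1)) + (ρ g) 0 1 * (ρ h) 1 0
        + (ρ g) 1 0 * (ρ h) 0 1 = 0 := by
      linear_combination hmul g h - (ρ h) 1 1 * ht g - (2 - (ρ g) 0 0) * ht h
    by_cases hc : ∃ g, (ρ g) 1 0 ≠ 0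
    · obtain ⟨g, hg⟩ := hc
      refine ⟨![(ρ g) 0 0 - 1, (ρ g) 1 0], fun h => hg (by simpa using congrFun h 1), fun h => ?_⟩
      obtain ⟨h1, h2⟩ := nilpotent_kernel_of_lower_ne_zero (hnil g) (hnil h) (hprod g h) hg
      ext i
      fin_cases i
      · simp [Matrix.mulVec, dotProduct, Fin.sum_univ_two]
        linear_combination h1
      · simp [Matrix.mulVec, dotProduct, Fin.sum_univ_two]
        linear_combination h2 + (ρ g) 1 0 * ht h
    · -- Every `ρ g` is upper triangular with `(ρ g 0 0 - 1) ^ 2 = 0`, so it fixes `(1, 0)`.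
      push Not at hc
      refine ⟨![1, 0], fun h => by simpa using congrFun h 0, fun g => ?_⟩
      have h0 : (ρ g) 0 0 - 1 = 0 := by
        have := hnil g
        rw [hc g, mul_zero, add_zero] at this
        exact mul_self_eq_zero.mp this
      ext i
      fin_cases i
      · simpa [Matrix.mulVec, dotProduct, Fin.sum_univ_two] using sub_eq_zero.mp h0
      · simpa [Matrix.mulVec, dotProduct, Fin.sum_univ_two] using hc g
  · rintro ⟨w, hw, hfix⟩ g
    have h0 : ((ρ g : Matrix (Fin 2) (Fin 2) k) - 1).det = 0 :=
      Matrix.exists_mulVec_eq_zero_iff.mp ⟨w, hw, by simp [Matrix.sub_mulVec, hfix g]⟩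
    rw [Matrix.det_fin_two] at h0
    simp at h0
    rw [Matrix.trace_fin_two]
    linear_combination hdet g - h0
end

section
/- Let k be an algebraically closed field, G a group, and ρ₁, ρ₂ : G → SL₂(k) two representations such that ρ₁ is irreducible and Tr(ρ₁(g)) = Tr(ρ₂(g)) for every g ∈ G. Then there exists P ∈ GL₂(k) such that ρ₂(g) = P · ρ₁(g) · P⁻¹ for every g ∈ G. -/
/-!
Extend `ρ₁, ρ₂` to algebra homomorphisms `φ₁, φ₂` from the group algebra `k[G]` to `M₂(k)`; they
satisfy `tr (φ₁ a) = tr (φ₂ a)` for all `a`.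

The key fact is that the matrices `ρ₁ g` have trivial orthogonal complement for the trace form
(`eq_zero_of_trace_mul_eq_zero`), whence they span `M₂(k)` and `φ₁` is onto. Indeed, a nonzero
singular `C` orthogonal to all `ρ₁ g` satisfies `C * ρ₁ g * C = tr (C * ρ₁ g) • C = 0`, so that
`{v | ∀ g, C (ρ₁ g v) = 0}` is an invariant line. If `C` is invertible, then `C * (ρ₁ h - μ)`, with
`μ` an eigenvalue of `ρ₁ h`, is singular and still orthogonal, hence zero; so every `ρ₁ h` is scalar,
which is again reducible.

Nondegeneracy of the trace form gives `ker φ₂ ≤ ker φ₁`. Counting dimensions, `φ₂` is onto as well,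
and then `ker φ₁ ≤ ker φ₂` by the same argument. So `φ₂ = θ ∘ φ₁` for an algebra automorphism `θ` of
`M₂(k)`, and such an automorphism is inner (`AlgEquiv.eq_linearEquivConjAlgEquiv`).
-/

open Matrix
open scoped MatrixGroups

/-- A `2 × 2` matrix `C` of rank at most one is `w fᵀ`, and then
`C * S * C = (fᵀ S w) • C`. -/
lemma mul_mul_eq_trace_smul_of_det_eq_zero {k : Type*} [Field k]
    (C S : Matrix (Fin 2) (Fin 2) k) (hC : C.det = 0) :
    C * S * C = (C * S).trace • C := by
  rw [Matrix.det_fin_two] at hC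
  ext i j
  fin_cases i <;> fin_cases j <;>
    simp [Matrix.mul_apply, Fin.sum_univ_two, Matrix.trace_fin_two] <;> grind

/-- An invariant subspace other than `0` and `k²` is a line. -/
lemma IsIrreducibleSL2.false_of_invariant {k : Type*} [Field k] {G : Type*} [Group G]
    {ρ : G →* Matrix.SpecialLinearGroup (Fin 2) k} (h : IsIrreducibleSL2 ρ)
    (W : Submodule k (Fin 2 → k)) (hbot : W ≠ ⊥) (htop : W ≠ ⊤)
    (hW : ∀ g : G, ∀ v ∈ W, ((ρ g : Matrix (Fin 2) (Fin 2) k)).mulVec v ∈ W) : False := by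
  refine h ⟨W, ?_, hW⟩
  have h1 := Submodule.finrank_lt htop
  have h2 : Module.finrank k W ≠ 0 := fun h0 => hbot (Submodule.finrank_eq_zero.mp h0)
  rw [Module.finrank_fin_fun] at h1
  omega

lemma IsIrreducibleSL2.eq_zero_of_det_eq_zero {k : Type*} [Field k] {G : Type*} [Group G]
    {ρ : G →* Matrix.SpecialLinearGroup (Fin 2) k} (h : IsIrreducibleSL2 ρ)
    (C : Matrix (Fin 2) (Fin 2) k) (hdet : C.det = 0)
    (hC : ∀ g, (C * (ρ g : Matrix (Fin 2) (Fin 2) k)).trace = 0) : C = 0 := by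
  by_contra hne
  have hCv : ∃ v, C *ᵥ v ≠ 0 := by
    by_contra! hall
    exact hne (Matrix.ext_of_mulVec_single fun i => by rw [hall, Matrix.zero_mulVec])
  obtain ⟨v, hv⟩ := hCv
  let W : Submodule k (Fin 2 → k) :=
    ⨅ g : G, LinearMap.ker (Matrix.mulVecLin (C * (ρ g : Matrix (Fin 2) (Fin 2) k)))
  have hmem (w : Fin 2 → k) :
      w ∈ W ↔ ∀ g, (C * (ρ g : Matrix (Fin 2) (Fin 2) k)) *ᵥ w = 0 := by
    simp only [W, Submodule.mem_iInf, LinearMap.mem_ker, Matrix.mulVecLin_apply]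
  refine h.false_of_invariant W ?_ ?_ ?_
  · intro hW
    apply hv
    rw [← Submodule.mem_bot k, ← hW, hmem]
    intro g
    rw [Matrix.mulVec_mulVec, mul_mul_eq_trace_smul_of_det_eq_zero C _ hdet, hC, zero_smul,
      Matrix.zero_mulVec]
  · intro hW
    apply hv
    have := (hmem v).mp (hW ▸ Submodule.mem_top) 1
    simpa using this
  · intro g w hw
    rw [hmem] at hw ⊢
    intro g'
    have := hw (g' * g)
    rw [map_mul, Matrix.SpecialLinearGroup.coe_mul, ← mul_assoc] at this
    rwa [Matrix.mulVec_mulVec]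

/-- The image of an irreducible representation has trivial orthogonal complement for the trace
form on `M₂(k)`. -/
lemma IsIrreducibleSL2.eq_zero_of_trace_mul_eq_zero {k : Type*} [Field k] [IsAlgClosed k]
    {G : Type*} [Group G]
    {ρ : G →* Matrix.SpecialLinearGroup (Fin 2) k} (h : IsIrreducibleSL2 ρ)
    (C : Matrix (Fin 2) (Fin 2) k)
    (hC : ∀ g, (C * (ρ g : Matrix (Fin 2) (Fin 2) k)).trace = 0) : C = 0 := by
  by_cases hdet : C.det = 0
  · exact h.eq_zero_of_det_eq_zero C hdet hC
  exfalso
  have hscalar (g : G) : ∃ μ : k, (ρ g : Matrix (Fin 2) (Fin 2) k) = μ • 1 := by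
    obtain ⟨μ, hμ⟩ := IsAlgClosed.exists_root (ρ g : Matrix (Fin 2) (Fin 2) k).charpoly
      (by simp [Matrix.charpoly_degree_eq_dim])
    refine ⟨μ, ?_⟩
    have hs : (μ • 1 - (ρ g : Matrix (Fin 2) (Fin 2) k)).det = 0 := by
      rw [Polynomial.IsRoot, Matrix.eval_charpoly] at hμ
      rwa [Matrix.smul_one_eq_diagonal]
    have h0 := h.eq_zero_of_det_eq_zero (C * (μ • 1 - (ρ g : Matrix (Fin 2) (Fin 2) k)))
      (by rw [Matrix.det_mul, hs, mul_zero]) (fun g' => by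
        have := hC (g * g')
        rw [map_mul, Matrix.SpecialLinearGroup.coe_mul] at this
        simp [mul_sub, sub_mul, hC g', mul_assoc, this])
    have hu : IsUnit C := (Matrix.isUnit_iff_isUnit_det C).mpr (Ne.isUnit hdet)
    exact (sub_eq_zero.mp (hu.mul_right_eq_zero.mp h0)).symm
  -- If all `ρ g` are scalar, the first coordinate axis is invariant.
  refine h ⟨k ∙ (Pi.single 0 1 : Fin 2 → k), finrank_span_singleton (by simp), ?_⟩
  intro g v hv
  obtain ⟨μ, hμ⟩ := hscalar g
  rw [hμ, Matrix.smul_mulVec, Matrix.one_mulVec]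
  exact Submodule.smul_mem _ _ hv

/-- The extension of `ρ` to the group algebra. -/
noncomputable def groupAlgebraHom {k : Type*} [Field k] {G : Type*} [Group G]
    (ρ : G →* Matrix.SpecialLinearGroup (Fin 2) k) :
    MonoidAlgebra k G →ₐ[k] Matrix (Fin 2) (Fin 2) k :=
  MonoidAlgebra.lift k (Matrix (Fin 2) (Fin 2) k) G
    { toFun := fun g => (ρ g : Matrix (Fin 2) (Fin 2) k)
      map_one' := by simp
      map_mul' := by simp }

lemma groupAlgebraHom_of {k : Type*} [Field k] {G : Type*} [Group G]
    (ρ : G →* Matrix.SpecialLinearGroup (Fin 2) k) (g : G) :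
    groupAlgebraHom ρ (MonoidAlgebra.of k G g) = (ρ g : Matrix (Fin 2) (Fin 2) k) := by
  simp [groupAlgebraHom]

/-- Burnside's theorem for two-dimensional representations. -/
lemma IsIrreducibleSL2.groupAlgebraHom_surjective {k : Type*} [Field k] [IsAlgClosed k]
    {G : Type*} [Group G]
    {ρ : G →* Matrix.SpecialLinearGroup (Fin 2) k} (h : IsIrreducibleSL2 ρ) :
    Function.Surjective (groupAlgebraHom ρ) := by
  by_contra hns
  have hlt : LinearMap.range (groupAlgebraHom ρ).toLinearMap < ⊤ := by
    rw [lt_top_iff_ne_top]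
    exact fun ht => hns (LinearMap.range_eq_top.mp ht)
  obtain ⟨f, hf, hle⟩ := Submodule.exists_le_ker_of_lt_top _ hlt
  -- Every linear form on matrices is `X ↦ tr (C * X)` for some `C`.
  let C : Matrix (Fin 2) (Fin 2) k := Matrix.of fun i j => f (Matrix.single j i 1)
  have hfC (X : Matrix (Fin 2) (Fin 2) k) : f X = (C * X).trace := by
    conv_lhs => rw [Matrix.matrix_eq_sum_single X]
    have (i j : Fin 2) : Matrix.single i j (X i j) = X i j • Matrix.single i j (1 : k) := by
      simp
    simp only [this, map_add, map_smul, Fin.sum_univ_two, Matrix.trace_fin_two, Matrix.mul_apply,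
      C, Matrix.of_apply, smul_eq_mul]
    ring
  apply hf
  have hC : C = 0 := h.eq_zero_of_trace_mul_eq_zero C fun g => by
    rw [← hfC, ← groupAlgebraHom_of]
    exact hle ⟨_, rfl⟩
  ext1 X
  simp [hfC, hC]

lemma trace_groupAlgebraHom_eq {k : Type*} [Field k] {G : Type*} [Group G]
    {ρ₁ ρ₂ : G →* Matrix.SpecialLinearGroup (Fin 2) k}
    (htr : ∀ g : G, Matrix.trace ((ρ₁ g : Matrix (Fin 2) (Fin 2) k)) =
        Matrix.trace ((ρ₂ g : Matrix (Fin 2) (Fin 2) k))) (a : MonoidAlgebra k G) :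
    (groupAlgebraHom ρ₁ a).trace = (groupAlgebraHom ρ₂ a).trace := by
  induction a using MonoidAlgebra.induction_on with
  | of g => simpa only [groupAlgebraHom_of] using htr g
  | add a b ha hb => simp [ha, hb]
  | smul r a ha => simp [ha]

/-- If the traces agree and `φ₁` is onto, nondegeneracy of the trace form gives
`ker φ₂ ≤ ker φ₁`. -/
lemma ker_le_ker_of_trace_eq {k A : Type*} [Field k] [Ring A] [Algebra k A]
    {φ₁ φ₂ : A →ₐ[k] Matrix (Fin 2) (Fin 2) k}
    (htr : ∀ a, (φ₁ a).trace = (φ₂ a).trace) (hs : Function.Surjective φ₁) :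
    RingHom.ker φ₂ ≤ RingHom.ker φ₁ := by
  intro a ha
  rw [RingHom.mem_ker] at ha ⊢
  refine Matrix.ext_iff_trace_mul_right.mpr fun X => ?_
  obtain ⟨b, rfl⟩ := hs X
  rw [← map_mul, htr, map_mul, ha]
  simp

/-- If `φ₁` is onto and `ker φ₂ ≤ ker φ₁`, the image of `φ₂` has dimension at least `dim M₂(k)`. -/
lemma surjective_of_ker_le_ker {k A : Type*} [Field k] [Ring A] [Algebra k A]
    {φ₁ φ₂ : A →ₐ[k] Matrix (Fin 2) (Fin 2) k} (hs : Function.Surjective φ₁)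
    (hker : RingHom.ker φ₂ ≤ RingHom.ker φ₁) : Function.Surjective φ₂ := by
  obtain ⟨σ, hσ⟩ := φ₁.toLinearMap.exists_rightInverse_of_surjective (LinearMap.range_eq_top.mpr hs)
  have hσ' (X) : φ₁ (σ X) = X := LinearMap.congr_fun hσ X
  have hinj : Function.Injective (φ₂.toLinearMap ∘ₗ σ) := by
    rw [← LinearMap.ker_eq_bot, LinearMap.ker_eq_bot']
    intro X hX
    have : φ₁ (σ X) = 0 := hker hX
    rwa [hσ'] at this
  intro Y
  obtain ⟨X, hX⟩ := LinearMap.surjective_of_injective hinj Y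
  exact ⟨σ X, hX⟩

/-- Over an algebraically closed field, two `SL₂`-representations with the same character,
one of which is irreducible, are `GL₂`-conjugate. -/
theorem conj_of_trace_eq_of_irreducible
    {k : Type*} [Field k] [IsAlgClosed k] {G : Type*} [Group G]
    (ρ₁ ρ₂ : G →* Matrix.SpecialLinearGroup (Fin 2) k)
    (h₁ : IsIrreducibleSL2 ρ₁)
    (htr : ∀ g : G, Matrix.trace ((ρ₁ g : Matrix (Fin 2) (Fin 2) k)) =
        Matrix.trace ((ρ₂ g : Matrix (Fin 2) (Fin 2) k))) :
    ∃ P : GL (Fin 2) k, ∀ g : G,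
      (ρ₂ g : Matrix (Fin 2) (Fin 2) k) =
        (P : Matrix (Fin 2) (Fin 2) k) * (ρ₁ g : Matrix (Fin 2) (Fin 2) k) *
          ((P⁻¹ : GL (Fin 2) k) : Matrix (Fin 2) (Fin 2) k) := by
  have hs₁ := h₁.groupAlgebraHom_surjective
  have htr' := trace_groupAlgebraHom_eq htr
  have hle := ker_le_ker_of_trace_eq htr' hs₁
  have hs₂ := surjective_of_ker_le_ker hs₁ hle
  have hker := le_antisymm (ker_le_ker_of_trace_eq (fun a => (htr' a).symm) hs₂) hle
  let θ : Matrix (Fin 2) (Fin 2) k ≃ₐ[k] Matrix (Fin 2) (Fin 2) k :=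
    (Ideal.quotientKerAlgEquivOfSurjective hs₁).symm.trans
      ((Ideal.quotientEquivAlgOfEq k hker).trans (Ideal.quotientKerAlgEquivOfSurjective hs₂))
  have hθ (a : MonoidAlgebra k G) : θ (groupAlgebraHom ρ₁ a) = groupAlgebraHom ρ₂ a := by
    have : (Ideal.quotientKerAlgEquivOfSurjective hs₁).symm (groupAlgebraHom ρ₁ a) =
        Ideal.Quotient.mk _ a := by
      rw [AlgEquiv.symm_apply_eq]
      rfl
    simp only [θ, AlgEquiv.trans_apply, this]
    rfl
  obtain ⟨T, hT⟩ := AlgEquiv.eq_linearEquivConjAlgEquiv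
    ((Matrix.toLinAlgEquiv'.symm.trans θ).trans Matrix.toLinAlgEquiv')
  let P : GL (Fin 2) k :=
    ⟨LinearMap.toMatrix' T.toLinearMap, LinearMap.toMatrix' T.symm.toLinearMap,
      by rw [← LinearMap.toMatrix'_comp]; simp, by rw [← LinearMap.toMatrix'_comp]; simp⟩
  refine ⟨P, fun g => ?_⟩
  have h := congrArg LinearMap.toMatrix'
    (DFunLike.congr_fun hT (Matrix.toLin' (ρ₁ g : Matrix (Fin 2) (Fin 2) k)))
  rw [LinearEquiv.conjAlgEquiv_apply, LinearMap.toMatrix'_comp, LinearMap.toMatrix'_comp,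
    LinearMap.toMatrix'_toLin'] at h
  rw [← groupAlgebraHom_of ρ₂, ← hθ, groupAlgebraHom_of]
  refine Eq.trans ?_ (h.trans ?_)
  · change _ = LinearMap.toMatrix' (Matrix.toLin' (θ (LinearMap.toMatrix' (Matrix.toLin' _))))
    rw [LinearMap.toMatrix'_toLin', LinearMap.toMatrix'_toLin']
  · rw [mul_assoc]; rfl
end
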